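/- Let U be a unitary N×N complex matrix, let L₀ be a nonzero Hermitian N×N complex matrix, let D ≥ 1 be a natural number, and let λ be a real number with 0 < λ. Suppose that for every natural number d with 0 ≤ d ≤ D the memory condition Re Tr(Uᵈ · L₀ · (U†)ᵈ · L₀) ≥ λ · ‖L₀‖_F² holds. Then the Cesàro average L_D := (1/(D+1)) · Σ_{d=0}^{D} Uᵈ · L₀ · (U†)ᵈ is nonzero and satisfies the imprecision bound ‖U·L_D − L_D·U‖_F / (2·‖L_D‖_F) ≤ 1/(√λ · D). -/

import Mathlib

open Matrix BigOperators

/-- Frobenius norm of a square complex matrix: `‖A‖_F = √(Tr(A†A))`. -/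
noncomputable def frobNorm {n : Type*} [Fintype n] (A : Matrix n n ℂ) : ℝ :=
  Real.sqrt (Matrix.trace (Aᴴ * A)).re

/-- Cesàro average `L_D = (1/(D+1)) ∑_{d=0}^{D} Uᵈ L₀ (U†)ᵈ`. -/
noncomputable def cesaroAvg {N : ℕ} (U L₀ : Matrix (Fin N) (Fin N) ℂ) (D : ℕ) :
    Matrix (Fin N) (Fin N) ℂ :=
  ((D : ℂ) + 1)⁻¹ • ∑ d ∈ Finset.range (D + 1), U ^ d * L₀ * (Uᴴ) ^ d

/-!
Conjugation `A ↦ U A U†` preserves the Frobenius inner product `⟨A, B⟩ = Tr(A†B)`, the product and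
the trace. For the average `A` of the first `m` conjugates of `L`, the commutator `UA - AU` equals
`(UAU† - A)U`, and `UAU† - A` telescopes to `m⁻¹(UᵐL(U†)ᵐ - L)`, so the commutator has norm at most
`2‖L‖ / m`. On the other hand `Tr(A²)` is the average of `Tr(UʲL(U†)ʲ · UᵏL(U†)ᵏ)`, which depends
only on `|j - k|`, so the memory condition gives `λ‖L‖² ≤ Re Tr(A²) = Re ⟨A†, A⟩ ≤ ‖A‖²` by
Cauchy–Schwarz.
-/

section BirkhoffAverage

open Finset

lemma map_birkhoffAverage_id_sub {R M F : Type*} [DivisionSemiring R] [AddCommGroup M] [Module R M]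
    [FunLike F M M] [AddMonoidHomClass F M M] (f : F) (m : ℕ) (x : M) :
    f (birkhoffAverage R f id m x) - birkhoffAverage R f id m x =
      (m : R)⁻¹ • (f^[m] x - x) := by
  have h : f (birkhoffAverage R f id m x) = birkhoffAverage R f id m (f x) := by
    rw [map_birkhoffAverage R R]
    simp only [birkhoffAverage, birkhoffSum, Function.comp_apply, id,
      ← Function.iterate_succ_apply, Function.iterate_succ_apply']
  rw [h, birkhoffAverage_apply_sub_birkhoffAverage, id, id]

lemma le_birkhoffAverage {K α : Type*} [Field K] [LinearOrder K] [IsStrictOrderedRing K]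
    {f : α → α} {g : α → K} {m : ℕ} (hm : m ≠ 0) {x : α} {c : K}
    (h : ∀ k < m, c ≤ g (f^[k] x)) : c ≤ birkhoffAverage K f g m x := by
  have hsum : m • c ≤ birkhoffSum f g m x := by
    have := card_nsmul_le_sum (range m) (fun k ↦ g (f^[k] x)) c fun k hk ↦ h k (mem_range.1 hk)
    rwa [card_range] at this
  rwa [birkhoffAverage, smul_eq_mul, le_inv_mul_iff₀ (by positivity), ← nsmul_eq_mul]

variable {𝕜 E α : Type*} [RCLike 𝕜] [SeminormedAddCommGroup E] [InnerProductSpace 𝕜 E]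
  {f : α → α} {m : ℕ} {x : α} {c : ℝ}

lemma le_re_inner_birkhoffAverage_right (hm : m ≠ 0) {g : α → E} {y : E}
    (h : ∀ k < m, c ≤ RCLike.re (inner 𝕜 y (g (f^[k] x)))) :
    c ≤ RCLike.re (inner 𝕜 y (birkhoffAverage 𝕜 f g m x)) := by
  let reInner : E →+ ℝ := (RCLike.re : 𝕜 →+ ℝ).comp (innerₛₗ 𝕜 y).toAddMonoidHom
  calc c ≤ birkhoffAverage ℝ f (reInner ∘ g) m x := le_birkhoffAverage hm h
    _ = _ := (map_birkhoffAverage 𝕜 ℝ reInner f g m x).symm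

lemma le_re_inner_birkhoffAverage (hm : m ≠ 0) {g₁ g₂ : α → E}
    (h : ∀ j < m, ∀ k < m, c ≤ RCLike.re (inner 𝕜 (g₁ (f^[j] x)) (g₂ (f^[k] x)))) :
    c ≤ RCLike.re (inner 𝕜 (birkhoffAverage 𝕜 f g₁ m x) (birkhoffAverage 𝕜 f g₂ m x)) := by
  refine le_re_inner_birkhoffAverage_right hm fun k hk ↦ ?_
  rw [inner_re_symm]
  refine le_re_inner_birkhoffAverage_right hm fun j hj ↦ ?_
  rw [inner_re_symm]
  exact h j hj k hk

end BirkhoffAverage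

section Conjugation

open Unitary

section StarRing

variable {S R : Type*} [Ring R] [StarMul R] [SMul S R] [IsScalarTower S R R]
  [SMulCommClass S R R]

lemma conjStarAlgAut_pow_apply (u : unitary R) (d : ℕ) (x : R) :
    conjStarAlgAut S R (u ^ d) x = (u : R) ^ d * x * star (u : R) ^ d := by
  rw [conjStarAlgAut_apply, SubmonoidClass.coe_pow, star_pow]

lemma iterate_conjStarAlgAut (u : unitary R) (d : ℕ) :
    (conjStarAlgAut S R u)^[d] = conjStarAlgAut S R (u ^ d) := by
  rw [map_pow, StarAlgEquiv.coe_pow]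

end StarRing

variable {n R : Type*} [Fintype n] [DecidableEq n] [CommRing R] [StarRing R]

lemma trace_conjStarAlgAut (u : unitaryGroup n R) (A : Matrix n n R) :
    (conjStarAlgAut R (Matrix n n R) u A).trace = A.trace := by
  rw [conjStarAlgAut_apply, trace_mul_cycle, coe_star_mul_self, one_mul]

lemma trace_conjStarAlgAut_pow_add_mul (u : unitaryGroup n R) (A B : Matrix n n R) (k e : ℕ) :
    (conjStarAlgAut R (Matrix n n R) (u ^ (k + e)) A *
      conjStarAlgAut R (Matrix n n R) (u ^ e) B).trace =
      (conjStarAlgAut R (Matrix n n R) (u ^ k) A * B).trace := by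
  rw [add_comm, pow_add, conjStarAlgAut_mul_apply, ← map_mul, trace_conjStarAlgAut]

lemma le_re_trace_conjStarAlgAut_pow_mul {𝕜 : Type*} [RCLike 𝕜] {u : unitaryGroup n 𝕜}
    {A : Matrix n n 𝕜} {m : ℕ} {c : ℝ}
    (h : ∀ d < m, c ≤ RCLike.re (conjStarAlgAut 𝕜 (Matrix n n 𝕜) (u ^ d) A * A).trace)
    {j k : ℕ} (hj : j < m) (hk : k < m) :
    c ≤ RCLike.re (conjStarAlgAut 𝕜 (Matrix n n 𝕜) (u ^ j) A *
      conjStarAlgAut 𝕜 (Matrix n n 𝕜) (u ^ k) A).trace := by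
  wlog hkj : k ≤ j generalizing j k
  · rw [trace_mul_comm]
    exact this hk hj (le_of_not_ge hkj)
  obtain ⟨i, rfl⟩ := Nat.exists_eq_add_of_le' hkj
  rw [trace_conjStarAlgAut_pow_add_mul]
  exact h i (by lia)

end Conjugation

section Frobenius

open Unitary
open scoped ComplexOrder

variable {n : Type*} [Fintype n]

lemma frobNorm_conjTranspose (A : Matrix n n ℂ) : frobNorm Aᴴ = frobNorm A := by
  rw [frobNorm, frobNorm, conjTranspose_conjTranspose, trace_mul_comm]

variable [DecidableEq n]

/-- The Frobenius norm, realized as the norm induced by the inner product `Tr(A†B)`. -/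
noncomputable local instance frobNormedAddCommGroup : NormedAddCommGroup (Matrix n n ℂ) :=
  toMatrixNormedAddCommGroup 1 PosDef.one

/-- The Frobenius (Hilbert–Schmidt) inner product `Tr(A†B)`. -/
noncomputable local instance frobInnerProductSpace : InnerProductSpace ℂ (Matrix n n ℂ) :=
  toMatrixInnerProductSpace 1 PosSemidef.one

lemma inner_eq_trace_conjTranspose_mul (A B : Matrix n n ℂ) : inner ℂ A B = (Aᴴ * B).trace := by
  rw [trace_mul_comm]
  change (B * 1 * Aᴴ).trace = _
  rw [mul_one]

lemma norm_eq_frobNorm (A : Matrix n n ℂ) : ‖A‖ = frobNorm A := by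
  rw [norm_eq_sqrt_re_inner (𝕜 := ℂ), inner_eq_trace_conjTranspose_mul]
  rfl

lemma frobNorm_mul_of_mem_unitaryGroup {U : Matrix n n ℂ} (hU : U ∈ unitaryGroup n ℂ)
    (A : Matrix n n ℂ) : frobNorm (A * U) = frobNorm A := by
  have h : A * U * (A * U)ᴴ = A * Aᴴ := by
    rw [conjTranspose_mul, mul_assoc, ← mul_assoc U, ← star_eq_conjTranspose U,
      mem_unitaryGroup_iff.1 hU, one_mul]
  rw [frobNorm, trace_mul_comm, h, trace_mul_comm, frobNorm]

lemma frobNorm_conjStarAlgAut (u : unitaryGroup n ℂ) (A : Matrix n n ℂ) :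
    frobNorm (conjStarAlgAut ℂ (Matrix n n ℂ) u A) = frobNorm A := by
  rw [frobNorm, ← star_eq_conjTranspose, ← map_star, ← map_mul, trace_conjStarAlgAut]
  rfl

/-- The Cesàro average `m⁻¹ ∑_{d < m} uᵈ L (u†)ᵈ` of the first `m` conjugates of `L`; it is `0` for
`m = 0`. -/
noncomputable def conjAverage (u : unitaryGroup n ℂ) (m : ℕ) (L : Matrix n n ℂ) : Matrix n n ℂ :=
  birkhoffAverage ℂ (conjStarAlgAut ℂ (Matrix n n ℂ) u) id m L

variable (u : unitaryGroup n ℂ) (m : ℕ) (L : Matrix n n ℂ)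

lemma conjTranspose_conjAverage :
    (conjAverage u m L)ᴴ =
      birkhoffAverage ℂ (conjStarAlgAut ℂ (Matrix n n ℂ) u) conjTranspose m L :=
  map_birkhoffAverage ℂ ℂ (conjTransposeAddEquiv n n ℂ) _ id m L

lemma frobNorm_commutator_conjAverage_le :
    frobNorm ⁅(u : Matrix n n ℂ), conjAverage u m L⁆ ≤ 2 * frobNorm L / m := by
  set A := conjAverage u m L
  set φ := conjStarAlgAut ℂ (Matrix n n ℂ) u with hφ
  have hcomm : ⁅(u : Matrix n n ℂ), A⁆ = (φ A - A) * u.1 := by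
    rw [Ring.lie_def, sub_mul, hφ, conjStarAlgAut_apply, mul_assoc _ _ (u : Matrix n n ℂ),
      coe_star_mul_self, mul_one]
  have htel : φ A - A = (m : ℂ)⁻¹ • (φ^[m] L - L) := map_birkhoffAverage_id_sub φ m L
  have hφm : ‖φ^[m] L‖ = ‖L‖ := by
    rw [hφ, iterate_conjStarAlgAut, norm_eq_frobNorm, frobNorm_conjStarAlgAut, norm_eq_frobNorm]
  rw [hcomm, frobNorm_mul_of_mem_unitaryGroup u.2, htel, ← norm_eq_frobNorm, ← norm_eq_frobNorm]
  calc ‖(m : ℂ)⁻¹ • (φ^[m] L - L)‖ = ‖φ^[m] L - L‖ / m := by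
        rw [norm_smul, norm_inv, Complex.norm_natCast, inv_mul_eq_div]
    _ ≤ (‖φ^[m] L‖ + ‖L‖) / m := by gcongr; exact norm_sub_le _ _
    _ = 2 * ‖L‖ / m := by rw [hφm, two_mul]

variable {u m L}

lemma le_frobNorm_conjAverage_sq (hm : m ≠ 0) {c : ℝ}
    (h : ∀ d < m, c ≤ (conjStarAlgAut ℂ (Matrix n n ℂ) (u ^ d) L * L).trace.re) :
    c ≤ frobNorm (conjAverage u m L) ^ 2 := by
  set A := conjAverage u m L
  calc c ≤ RCLike.re (inner ℂ Aᴴ A) := by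
        rw [conjTranspose_conjAverage]
        refine le_re_inner_birkhoffAverage hm fun j hj k hk ↦ ?_
        rw [inner_eq_trace_conjTranspose_mul, conjTranspose_conjTranspose, id,
          iterate_conjStarAlgAut, iterate_conjStarAlgAut]
        exact le_re_trace_conjStarAlgAut_pow_mul h hj hk
    _ ≤ ‖Aᴴ‖ * ‖A‖ := re_inner_le_norm _ _
    _ = frobNorm A ^ 2 := by
        rw [norm_eq_frobNorm, norm_eq_frobNorm, frobNorm_conjTranspose, sq]

theorem cesaro_average_imprecision_bound_general (hL : L ≠ 0) (hm : m ≠ 0) {lam : ℝ}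
    (hlam : 0 < lam)
    (hmem : ∀ d < m, lam * frobNorm L ^ 2 ≤
      ((u : Matrix n n ℂ) ^ d * L * (u : Matrix n n ℂ)ᴴ ^ d * L).trace.re) :
    conjAverage u m L ≠ 0 ∧
      frobNorm ⁅(u : Matrix n n ℂ), conjAverage u m L⁆ /
        (2 * frobNorm (conjAverage u m L)) ≤ 1 / (√lam * m) := by
  set A := conjAverage u m L
  have hLpos : 0 < frobNorm L := by rw [← norm_eq_frobNorm]; exact norm_pos_iff.2 hL
  have hsq : lam * frobNorm L ^ 2 ≤ frobNorm A ^ 2 :=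
    le_frobNorm_conjAverage_sq hm fun d hd ↦ by
      rw [conjStarAlgAut_pow_apply]
      exact hmem d hd
  have hlow : √lam * frobNorm L ≤ frobNorm A := by
    refine le_of_sq_le_sq ?_ (Real.sqrt_nonneg _)
    rwa [mul_pow, Real.sq_sqrt hlam.le]
  have hlowpos : 0 < √lam * frobNorm L := by positivity
  constructor
  · rw [← norm_pos_iff, norm_eq_frobNorm]
    exact hlowpos.trans_le hlow
  · calc frobNorm ⁅(u : Matrix n n ℂ), A⁆ / (2 * frobNorm A)
        ≤ (2 * frobNorm L / m) / (2 * (√lam * frobNorm L)) := by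
          gcongr
          exact frobNorm_commutator_conjAverage_le u m L
      _ = 1 / (√lam * m) := by field_simp

end Frobenius

lemma cesaroAvg_eq_conjAverage {N : ℕ} (u : unitaryGroup (Fin N) ℂ) (L : Matrix (Fin N) (Fin N) ℂ)
    (D : ℕ) : cesaroAvg u L D = conjAverage u (D + 1) L := by
  simp only [cesaroAvg, conjAverage, birkhoffAverage, birkhoffSum, iterate_conjStarAlgAut,
    conjStarAlgAut_pow_apply, star_eq_conjTranspose, id, Nat.cast_add, Nat.cast_one]

theorem cesaro_average_imprecision_bound {N : ℕ}
    (U L₀ : Matrix (Fin N) (Fin N) ℂ)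
    (hU : Uᴴ * U = 1) (hHerm : L₀.IsHermitian) (hL₀ : L₀ ≠ 0)
    (D : ℕ) (hD : 1 ≤ D) (lam : ℝ) (hlam : 0 < lam)
    (hmem : ∀ d : ℕ, d ≤ D →
      lam * (frobNorm L₀) ^ 2 ≤ (Matrix.trace (U ^ d * L₀ * (Uᴴ) ^ d * L₀)).re) :
    cesaroAvg U L₀ D ≠ 0 ∧
      frobNorm (U * cesaroAvg U L₀ D - cesaroAvg U L₀ D * U) /
          (2 * frobNorm (cesaroAvg U L₀ D)) ≤ 1 / (Real.sqrt lam * D) := by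
  lift U to unitaryGroup (Fin N) ℂ using mem_unitaryGroup_iff'.2 hU
  rw [cesaroAvg_eq_conjAverage]
  refine (cesaro_average_imprecision_bound_general hL₀ D.succ_ne_zero hlam
    fun d hd ↦ hmem d (Nat.lt_succ_iff.1 hd)).imp_right fun hle ↦ hle.trans ?_
  gcongr
  exact D.le_succ
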